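/- For all k, l ≥ 0 the derivations X'₀, X'₁, X'₂, … satisfy: ⁅X'_{3l+1}, X'_{3k+1}⁆ = 0, ⁅X'_{3l+2}, X'_{3k+2}⁆ = 0, ⁅X'_{3l}, X'_{3k}⁆ = 0, ⁅X'_{3l+1}, X'_{3k+2}⁆ = X'_{3(k+l)+3}, ⁅X'_{3l}, X'_{3k+1}⁆ = X'_{3(k+l)+1}, and ⁅X'_{3l}, X'_{3k+2}⁆ = −X'_{3(k+l)+2}. -/

import Mathlib

/-!
The engine is a "zero curvature" argument. A derivation which commutes with `D` and kills
every `E q` is zero: applying the commutator to `E 1` shows that it kills `u₁`, and then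
commuting with `D` shows that it kills every `uₙ` (`eq_zero_of_lie_D`). So a bracket identity
holds as soon as both sides agree after applying `⁅D, ·⁆` and on the `E q`.

Write `e k`, `f k`, `h k` for `X'_{3k+1}`, `X'_{3k+2}`, `X'_{3k}` and `a = E 1`, `b = E (-1)`.
The brackets with `D` are
`⁅D, e k⁆ = -a h k`, `⁅D, f k⁆ = b h k`, `⁅D, h (k+1)⁆ = a f k - b e k`, `⁅D, h 0⁆ = 0`.
By the Leibniz rule, `⁅D, ·⁆` thus turns every identity to be shown into identities of smaller
degree, the degree being `2k+1` on `e k`, `f k` and `2k` on `h k`. Both families of formulas are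
proved by a simultaneous induction on `k + l` (`loop_relations`), which uses only the
annihilation principle and the values on `a` and `b`, and so is carried out over an arbitrary
commutative `ℂ`-algebra.
-/

set_option synthInstance.maxHeartbeats 1000000
set_option maxHeartbeats 1000000

noncomputable section

/-- The algebra of "quasipolynomials": the group algebra of `ℤ` (group element `q`
modelling `e^{q·u}`) with coefficients in polynomials in countably many variables
(variable of index `n-1` modelling the `n`-th `x`-derivative of `u`). -/
abbrev QP : Type := AddMonoidAlgebra (MvPolynomial ℕ ℂ) ℤ

/-- `E q` models `e^{q·u}`. -/
def E (q : ℤ) : QP := AddMonoidAlgebra.single q 1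

/-- `uvar n` models the `n`-th derivative `∂ⁿu/∂xⁿ` (for `n ≥ 1`); it is the
polynomial generator of index `n - 1`. -/
def uvar (n : ℕ) : QP := AddMonoidAlgebra.single 0 (MvPolynomial.X (n - 1))

/-- `D` is the total `x`-derivative: the unique `ℂ`-derivation of `QP` with
`D uₙ = u_{n+1}` for `n ≥ 1` and `D (E q) = q • (u₁ * E q)`. -/
def IsD (D : Derivation ℂ QP QP) : Prop :=
  (∀ n : ℕ, 1 ≤ n → D (uvar n) = uvar (n + 1)) ∧
  (∀ q : ℤ, D (E q) = q • (uvar 1 * E q))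

/-- `X₀` models `∂/∂u`: the unique `ℂ`-derivation with `X₀ uₙ = 0` and `X₀ (E q) = q • E q`. -/
def IsX0 (X : Derivation ℂ QP QP) : Prop :=
  (∀ n : ℕ, 1 ≤ n → X (uvar n) = 0) ∧ (∀ q : ℤ, X (E q) = q • E q)

/-- `X_f` is the unique `ℂ`-derivation with `X_f (E q) = 0` for all `q` and
`X_f uₙ = D^[n-1] f` for all `n ≥ 1`. -/
def IsXf (D : Derivation ℂ QP QP) (f : QP) (Xf : Derivation ℂ QP QP) : Prop :=
  (∀ q : ℤ, Xf (E q) = 0) ∧ (∀ n : ℕ, 1 ≤ n → Xf (uvar n) = (⇑D)^[n - 1] f)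

/-! ### Loop algebra relations over a commutative algebra -/

theorem cancel_aux {A : Type*} [CommRing A] (u x g : A) (q : ℤ) :
    0 - q • (u • (0 : A) + x • g) + g • q • x = 0 := by
  simp only [smul_eq_mul, zsmul_eq_mul]
  ring

section Abstract

variable {A : Type*} [CommRing A] [Algebra ℂ A]

theorem der_lie_smul (X Y : Derivation ℂ A A) (p : A) : ⁅X, p • Y⁆ = X p • Y + p • ⁅X, Y⁆ := by
  ext x
  simp only [Derivation.commutator_apply, Derivation.smul_apply, Derivation.add_apply,
    smul_eq_mul, Derivation.leibniz]
  ring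

theorem der_smul_lie (X Y : Derivation ℂ A A) (p : A) : ⁅p • X, Y⁆ = p • ⁅X, Y⁆ - Y p • X := by
  ext x
  simp only [Derivation.commutator_apply, Derivation.smul_apply, Derivation.sub_apply,
    smul_eq_mul, Derivation.leibniz]
  ring

theorem der_eq_neg_of_add_eq_zero {X Y : Derivation ℂ A A} (hXY : X + Y = 0) : X = -Y :=
  eq_neg_of_add_eq_zero_left hXY

theorem der_lie_neg_of_eq_neg {X Y Z : Derivation ℂ A A} (hXY : ⁅X, Y⁆ = -Z) :
    ⁅X, -Y⁆ = Z := by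
  rw [lie_neg, hXY, neg_neg]

/-- The induction statement at level `n`: the brackets of `D` with `e n`, `f n`, `h (n + 1)`,
and all the bracket relations between elements whose indices sum to `n`. -/
structure Level (D : Derivation ℂ A A) (a b : A) (e f h : ℕ → Derivation ℂ A A) (n : ℕ) :
    Prop where
  De : ⁅D, e n⁆ = -(a • h n)
  Df : ⁅D, f n⁆ = b • h n
  Dh : ⁅D, h (n + 1)⁆ = a • f n - b • e n
  ee : ∀ l k, l + k = n → ⁅e l, e k⁆ = 0
  ff : ∀ l k, l + k = n → ⁅f l, f k⁆ = 0
  hh : ∀ l k, l + k = n → ⁅h l, h k⁆ = 0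
  ef : ∀ l k, l + k = n → ⁅e l, f k⁆ = h (n + 1)
  he : ∀ l k, l + k = n → ⁅h l, e k⁆ = e n
  hf : ∀ l k, l + k = n → ⁅h l, f k⁆ = -f n

/-- All levels hold, provided a derivation commuting with `D` and killing `a` and `b` is zero
(`K`), and the data satisfy the recursion and have the right initial values. -/
theorem loop_relations (D : Derivation ℂ A A) (a b : A) (e f h : ℕ → Derivation ℂ A A)
    (K : ∀ Y : Derivation ℂ A A, ⁅D, Y⁆ = 0 → Y a = 0 → Y b = 0 → Y = 0)
    (ea : e 0 a = 0) (eb : e 0 b = 0) (fa : f 0 a = 0) (fb : f 0 b = 0)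
    (ha : h 0 a = a) (hb : h 0 b = -b)
    (De0 : ⁅D, e 0⁆ = -(a • h 0)) (Df0 : ⁅D, f 0⁆ = b • h 0) (Dh0 : ⁅D, h 0⁆ = 0)
    (re : ∀ n, e (n + 1) = -⁅e 0, h (n + 1)⁆) (rf : ∀ n, f (n + 1) = ⁅f 0, h (n + 1)⁆)
    (rh : ∀ n, h (n + 1) = ⁅e 0, f n⁆) (n : ℕ) : Level D a b e f h n := by
  have kill : ∀ m, e m a = 0 ∧ e m b = 0 ∧ f m a = 0 ∧ f m b = 0 ∧
      h (m + 1) a = 0 ∧ h (m + 1) b = 0 := by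
    intro m
    induction m with
    | zero => simp [rh, Derivation.commutator_apply, ea, eb, fa, fb]
    | succ m ih =>
      obtain ⟨-, -, -, -, h1, h2⟩ := ih
      rw [rh (m + 1), re m, rf m]
      simp [Derivation.commutator_apply, ea, eb, fa, fb, h1, h2]
  have kea := fun m => (kill m).1
  have keb := fun m => (kill m).2.1
  have kfa := fun m => (kill m).2.2.1
  have kfb := fun m => (kill m).2.2.2.1
  have kha := fun m => (kill m).2.2.2.2.1
  have khb := fun m => (kill m).2.2.2.2.2
  induction n using Nat.strong_induction_on with
  | _ n ih =>
  have hh : ∀ l k, l + k = n → ⁅h l, h k⁆ = 0 := by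
    intro l k hlk
    rcases l with _ | l <;> rcases k with _ | k
    · exact lie_self _
    · have i1 := (ih k (by omega)).he 0 k (by omega)
      have i2 := (ih k (by omega)).hf 0 k (by omega)
      apply K
      · rw [leibniz_lie, Dh0, (ih k (by omega)).Dh]
        simp only [lie_sub, der_lie_smul, i1, i2, ha, hb, zero_lie]
        module
      · simp [Derivation.commutator_apply, ha, kha]
      · simp [Derivation.commutator_apply, hb, khb]
    · have i1 := (ih l (by omega)).he 0 l (by omega)
      have i2 := (ih l (by omega)).hf 0 l (by omega)
      rw [← lie_skew, neg_eq_zero]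
      apply K
      · rw [leibniz_lie, Dh0, (ih l (by omega)).Dh]
        simp only [lie_sub, der_lie_smul, i1, i2, ha, hb, zero_lie]
        module
      · simp [Derivation.commutator_apply, ha, kha]
      · simp [Derivation.commutator_apply, hb, khb]
    · have i1 := (ih (l + k + 1) (by omega)).he (l + 1) k (by omega)
      have i2 := (ih (l + k + 1) (by omega)).hf (l + 1) k (by omega)
      have i3 := (ih (l + k + 1) (by omega)).he (k + 1) l (by omega)
      have i4 := (ih (l + k + 1) (by omega)).hf (k + 1) l (by omega)
      rw [← lie_skew, neg_eq_iff_eq_neg] at i3 i4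
      apply K
      · rw [leibniz_lie, (ih l (by omega)).Dh, (ih k (by omega)).Dh]
        simp only [lie_sub, sub_lie, der_lie_smul, der_smul_lie, i1, i2, i3, i4, kha, khb]
        module
      · simp [Derivation.commutator_apply, kha]
      · simp [Derivation.commutator_apply, khb]
  have De : ⁅D, e n⁆ = -(a • h n) := by
    rcases n with _ | n
    · exact De0
    · have i1 := (ih n (by omega)).ee 0 n (by omega)
      have i2 := (ih n (by omega)).ef 0 n (by omega)
      have i3 := hh 0 (n + 1) (by omega)
      rw [re, lie_neg, leibniz_lie, De0, (ih n (by omega)).Dh]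
      simp only [lie_sub, neg_lie, der_lie_smul, der_smul_lie, i1, i2, i3, kha, ea, eb]
      module
  have Df : ⁅D, f n⁆ = b • h n := by
    rcases n with _ | n
    · exact Df0
    · have i1 := (ih n (by omega)).ff 0 n (by omega)
      have i2 := (ih n (by omega)).ef n 0 (by omega)
      have i3 := hh 0 (n + 1) (by omega)
      rw [← lie_skew, neg_eq_iff_eq_neg] at i2
      rw [rf, leibniz_lie, Df0, (ih n (by omega)).Dh]
      simp only [lie_sub, der_lie_smul, der_smul_lie, i1, i2, i3, khb, fa, fb]
      module
  -- The formulas for `⁅D, e k⁆` and `⁅D, f k⁆` are now available for all `k ≤ n`.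
  have De' : ∀ k ≤ n, ⁅D, e k⁆ = -(a • h k) := fun k hk =>
    hk.lt_or_eq.elim (fun hlt => (ih k hlt).De) (fun heq => heq ▸ De)
  have Df' : ∀ k ≤ n, ⁅D, f k⁆ = b • h k := fun k hk =>
    hk.lt_or_eq.elim (fun hlt => (ih k hlt).Df) (fun heq => heq ▸ Df)
  have he : ∀ l k, l + k = n → ⁅h l, e k⁆ = e n := by
    intro l k hlk
    have i0 := hh l k hlk
    rw [← sub_eq_zero]
    rcases l with _ | l
    · obtain rfl : k = n := by omega
      apply K
      · rw [lie_sub, leibniz_lie, Dh0, De]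
        simp only [lie_neg, der_lie_smul, i0, ha, zero_lie]
        module
      · simp [Derivation.commutator_apply, ha, kea]
      · simp [Derivation.commutator_apply, hb, keb]
    · have i1 := (ih (l + k) (by omega)).ee l k rfl
      have i2 := (ih (l + k) (by omega)).ef k l (by omega)
      rw [← lie_skew, neg_eq_iff_eq_neg] at i2
      obtain rfl : n = l + k + 1 := by omega
      apply K
      · rw [lie_sub, leibniz_lie, (ih l (by omega)).Dh, De, De' k (by omega)]
        simp only [lie_neg, sub_lie, der_lie_smul, der_smul_lie, i0, i1, i2, kha, kea, keb]
        module
      · simp [Derivation.commutator_apply, kha, kea]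
      · simp [Derivation.commutator_apply, khb, keb]
  have hf : ∀ l k, l + k = n → ⁅h l, f k⁆ = -f n := by
    intro l k hlk
    have i0 := hh l k hlk
    rw [← add_eq_zero_iff_eq_neg]
    rcases l with _ | l
    · obtain rfl : k = n := by omega
      apply K
      · rw [lie_add, leibniz_lie, Dh0, Df]
        simp only [der_lie_smul, i0, hb, zero_lie]
        module
      · simp [Derivation.commutator_apply, ha, kfa]
      · simp [Derivation.commutator_apply, hb, kfb]
    · have i1 := (ih (l + k) (by omega)).ff l k rfl
      have i2 := (ih (l + k) (by omega)).ef l k rfl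
      obtain rfl : n = l + k + 1 := by omega
      apply K
      · rw [lie_add, leibniz_lie, (ih l (by omega)).Dh, Df, Df' k (by omega)]
        simp only [sub_lie, der_lie_smul, der_smul_lie, i0, i1, i2, khb, kfa, kfb]
        module
      · simp [Derivation.commutator_apply, kha, kfa]
      · simp [Derivation.commutator_apply, khb, kfb]
  have he' : ∀ l k, l + k = n → ⁅e k, h l⁆ = -e n := fun l k hlk => by
    rw [← lie_skew, he l k hlk]
  have hf' : ∀ l k, l + k = n → ⁅f k, h l⁆ = f n := fun l k hlk => by
    rw [← lie_skew, hf l k hlk, neg_neg]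
  have Dh : ⁅D, h (n + 1)⁆ = a • f n - b • e n := by
    rw [rh, leibniz_lie, De0, Df]
    simp only [neg_lie, der_lie_smul, der_smul_lie, hf 0 n (by omega), he' n 0 (by omega), eb, kfa]
    module
  refine ⟨De, Df, Dh, ?_, ?_, hh, ?_, he, hf⟩
  · intro l k hlk
    apply K
    · rw [leibniz_lie, De' l (by omega), De' k (by omega)]
      simp only [neg_lie, lie_neg, der_lie_smul, der_smul_lie, he l k hlk,
        he' k l (by omega), kea]
      module
    · simp [Derivation.commutator_apply, kea]
    · simp [Derivation.commutator_apply, keb]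
  · intro l k hlk
    apply K
    · rw [leibniz_lie, Df' l (by omega), Df' k (by omega)]
      simp only [der_lie_smul, der_smul_lie, hf l k hlk, hf' k l (by omega), kfb]
      module
    · simp [Derivation.commutator_apply, kfa]
    · simp [Derivation.commutator_apply, kfb]
  · intro l k hlk
    rw [← sub_eq_zero]
    apply K
    · rw [lie_sub, leibniz_lie, De' l (by omega), Df' k (by omega), Dh]
      simp only [neg_lie, der_lie_smul, der_smul_lie, hf l k hlk, he' k l (by omega), keb, kfa]
      module
    · simp [Derivation.commutator_apply, kea, kfa, kha]
    · simp [Derivation.commutator_apply, keb, kfb, khb]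

end Abstract

/-! ### The annihilation principle for quasipolynomials -/

theorem E_mul (p q : ℤ) : E p * E q = E (p + q) := by
  rw [E, E, E, AddMonoidAlgebra.single_mul_single, mul_one]

theorem E_zero : E 0 = 1 := rfl

theorem der_eq_zero (Y : Derivation ℂ QP QP) (hu : ∀ n, 1 ≤ n → Y (uvar n) = 0)
    (hE : ∀ q, Y (E q) = 0) : Y = 0 := by
  have hp : ∀ p : MvPolynomial ℕ ℂ, Y (AddMonoidAlgebra.single 0 p) = 0 := by
    intro p
    induction p using MvPolynomial.induction_on with
    | C c => exact Y.map_algebraMap c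
    | add p q hp hq => rw [AddMonoidAlgebra.single_add, map_add, hp, hq, add_zero]
    | mul_X p n hp =>
      have h1 : (AddMonoidAlgebra.single 0 (p * MvPolynomial.X n) : QP)
          = AddMonoidAlgebra.single 0 p * uvar (n + 1) := by
        simp [uvar]
      rw [h1, Derivation.leibniz, hp, hu (n + 1) (by omega), smul_zero, smul_zero, add_zero]
  refine Derivation.ext fun x => ?_
  induction x using AddMonoidAlgebra.induction_linear with
  | zero => simp
  | add x y hx hy => rw [map_add, hx, hy]; simp
  | single q p =>
    have h1 : (AddMonoidAlgebra.single q p : QP) = AddMonoidAlgebra.single 0 p * E q := by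
      simp [E]
    rw [h1, Derivation.leibniz, hp, hE]
    simp

theorem der_E_eq_zero (Y : Derivation ℂ QP QP) (ha : Y (E 1) = 0) (hb : Y (E (-1)) = 0)
    (q : ℤ) : Y (E q) = 0 := by
  induction q using Int.induction_on with
  | zero => rw [E_zero]; exact Y.map_one_eq_zero
  | succ i hi => rw [← E_mul, Derivation.leibniz, hi, ha]; simp
  | pred i hi => rw [sub_eq_add_neg, ← E_mul, Derivation.leibniz, hi, hb]; simp

/-- A derivation commuting with `D` and killing the exponentials is zero. -/
theorem eq_zero_of_lie_D {D : Derivation ℂ QP QP} (hD : IsD D) (Y : Derivation ℂ QP QP)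
    (hY : ⁅D, Y⁆ = 0) (ha : Y (E 1) = 0) (hb : Y (E (-1)) = 0) : Y = 0 := by
  have hE := der_E_eq_zero Y ha hb
  have hc : ∀ x, D (Y x) = Y (D x) := fun x => by
    have := congrArg (fun Z : Derivation ℂ QP QP => Z x) hY
    simpa [Derivation.commutator_apply, sub_eq_zero] using this
  refine der_eq_zero Y (fun n hn => ?_) hE
  induction n, hn using Nat.le_induction with
  | base =>
    have h1 := hc (E 1)
    rw [ha, map_zero, hD.2, one_smul, Derivation.leibniz, ha, smul_zero, zero_add,
      smul_eq_mul] at h1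
    -- `E 1` is invertible, with inverse `E (-1)`.
    have h2 : E (-1) * (E 1 * Y (uvar 1)) = 0 := by rw [← h1, mul_zero]
    rwa [← mul_assoc, E_mul, neg_add_cancel, E_zero, one_mul] at h2
  | succ n hn ih => rw [← hD.1 n hn, ← hc, ih, map_zero]

/-! ### Brackets of `D` with the generators -/

theorem lie_D_X0 {D X0 : Derivation ℂ QP QP} (hD : IsD D) (hX0 : IsX0 X0) : ⁅D, X0⁆ = 0 := by
  refine der_eq_zero _ (fun n hn => ?_) (fun q => ?_)
  · rw [Derivation.commutator_apply, hX0.1 n hn, hD.1 n hn, hX0.1 _ (by omega), map_zero, sub_zero]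
  · rw [Derivation.commutator_apply, hX0.2, hD.2, map_zsmul, map_zsmul, hD.2,
      Derivation.leibniz, hX0.1 1 le_rfl, hX0.2, smul_zero, add_zero, smul_eq_mul,
      mul_smul_comm, sub_self]

/-- This initial zero curvature formula drives the induction. -/
theorem lie_D_Xf {D X0 X : Derivation ℂ QP QP} {g : QP} (hD : IsD D) (hX0 : IsX0 X0)
    (hX : IsXf D g X) : ⁅D, X⁆ = -(g • X0) := by
  refine der_eq_neg_of_add_eq_zero (der_eq_zero _ (fun n hn => ?_) (fun q => ?_))
  · rw [Derivation.add_apply, Derivation.smul_apply, hX0.1 n hn, smul_zero, add_zero,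
      Derivation.commutator_apply, hX.2 n hn, hD.1 n hn, hX.2 _ (by omega),
      ← Function.iterate_succ_apply' (⇑D), show (n - 1).succ = n + 1 - 1 by omega, sub_self]
  · rw [Derivation.add_apply, Derivation.smul_apply, hX0.2, Derivation.commutator_apply, hX.1,
      hD.2, map_zsmul, map_zero, Derivation.leibniz, hX.1, hX.2 1 le_rfl,
      Nat.sub_self, Function.iterate_zero_apply]
    exact cancel_aux _ _ _ _

/-- For the sinh-Gordon sequence `X'₀ := X₀`, `X'₁ := X_{E 1}`, `X'₂ := -X_{E (-1)}`,
`X'₃ := ⁅X'₁, X'₂⁆` and, for `k ≥ 1`, `X'_{3k+1} := -⁅X'₁, X'_{3k}⁆`,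
`X'_{3k+2} := ⁅X'₂, X'_{3k}⁆`, `X'_{3k+3} := ⁅X'₁, X'_{3k+2}⁆`: for all `k, l ≥ 0`,
`⁅X'_{3l+1}, X'_{3k+1}⁆ = 0`, `⁅X'_{3l+2}, X'_{3k+2}⁆ = 0`, `⁅X'_{3l}, X'_{3k}⁆ = 0`,
`⁅X'_{3l+1}, X'_{3k+2}⁆ = X'_{3(k+l)+3}`, `⁅X'_{3l}, X'_{3k+1}⁆ = X'_{3(k+l)+1}`,
`⁅X'_{3l}, X'_{3k+2}⁆ = -X'_{3(k+l)+2}`. -/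
theorem stmt_8 (D X0 Xm : Derivation ℂ QP QP) (Xs : ℕ → Derivation ℂ QP QP)
    (hD : IsD D) (hX0 : IsX0 X0)
    (hXs1 : IsXf D (E 1) (Xs 1)) (hXm : IsXf D (E (-1)) Xm)
    (hXs0 : Xs 0 = X0) (hXs2 : Xs 2 = -Xm) (hXs3 : Xs 3 = ⁅Xs 1, Xs 2⁆)
    (hrec : ∀ k : ℕ, 1 ≤ k →
      Xs (3 * k + 1) = -⁅Xs 1, Xs (3 * k)⁆ ∧
      Xs (3 * k + 2) = ⁅Xs 2, Xs (3 * k)⁆ ∧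
      Xs (3 * k + 3) = ⁅Xs 1, Xs (3 * k + 2)⁆) :
    ∀ k l : ℕ,
      ⁅Xs (3 * l + 1), Xs (3 * k + 1)⁆ = 0 ∧
      ⁅Xs (3 * l + 2), Xs (3 * k + 2)⁆ = 0 ∧
      ⁅Xs (3 * l), Xs (3 * k)⁆ = 0 ∧
      ⁅Xs (3 * l + 1), Xs (3 * k + 2)⁆ = Xs (3 * (k + l) + 3) ∧
      ⁅Xs (3 * l), Xs (3 * k + 1)⁆ = Xs (3 * (k + l) + 1) ∧
      ⁅Xs (3 * l), Xs (3 * k + 2)⁆ = -Xs (3 * (k + l) + 2) := by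
  have key := loop_relations D (E 1) (E (-1)) (fun k => Xs (3 * k + 1)) (fun k => Xs (3 * k + 2))
    (fun k => Xs (3 * k)) (eq_zero_of_lie_D hD) (hXs1.1 _) (hXs1.1 _)
    (by simp [hXs2, hXm.1]) (by simp [hXs2, hXm.1])
    (by simp [hXs0, hX0.2]) (by simp [hXs0, hX0.2])
    (by simpa [hXs0] using lie_D_Xf hD hX0 hXs1)
    (by simpa [hXs0, hXs2] using der_lie_neg_of_eq_neg (lie_D_Xf hD hX0 hXm))
    (by simpa [hXs0] using lie_D_X0 hD hX0)
    (fun n => (hrec (n + 1) (by omega)).1) (fun n => (hrec (n + 1) (by omega)).2.1)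
    (fun n => by
      rcases n with _ | n
      · exact hXs3
      · exact (hrec (n + 1) (by omega)).2.2)
  intro k l
  have L := key (k + l)
  exact ⟨(key _).ee l k rfl, (key _).ff l k rfl, (key _).hh l k rfl, L.ef l k (add_comm l k),
    L.he l k (add_comm l k), L.hf l k (add_comm l k)⟩
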